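/- Let S be a Noetherian unique factorization domain and let 0 → M → N → P → 0 be a short exact sequence of finitely generated torsion S-modules. Then Ord(N) = Ord(M)·Ord(P) up to units, where Ord denotes the order of the module (a generator of the smallest principal ideal containing the zeroth Fitting ideal E₀). -/

import Mathlib

/-- The zeroth Fitting ideal `E₀(M)` of a module `M` over a commutative ring `S`:
the ideal generated by determinants of square matrices of relations, i.e. by `det A` for
every `n`, every surjection `φ : S^n → M` and every `n×n` matrix `A` whose columns are
relations (`φ ∘ A = 0`).  For a finitely presented module with presentation
`S^m → S^n → M → 0` this is the ideal generated by the `n×n` minors of the presentation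
matrix. -/
def fittingIdeal₀ (S : Type*) [CommRing S] (M : Type*) [AddCommGroup M] [Module S M] :
    Ideal S :=
  Ideal.span { r : S | ∃ (n : ℕ) (φ : (Fin n → S) →ₗ[S] M) (A : Matrix (Fin n) (Fin n) S),
    Function.Surjective φ ∧ (∀ v : Fin n → S, φ (A.mulVec v) = 0) ∧ r = A.det }

/-- `x` is an order of the module `M` (denoted `Ord(M)`): the principal ideal `(x)` is the
smallest principal ideal containing the zeroth Fitting ideal `E₀(M)`. -/
def IsOrder (S : Type*) [CommRing S] (M : Type*) [AddCommGroup M] [Module S M] (x : S) :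
    Prop :=
  fittingIdeal₀ S M ≤ Ideal.span {x} ∧
    ∀ y : S, fittingIdeal₀ S M ≤ Ideal.span {y} → Ideal.span {x} ≤ Ideal.span {y}


namespace OrdAux

/-- Generators and square relation matrices. -/
def IsRel (S : Type*) [CommRing S] {M : Type*} [AddCommGroup M] [Module S M]
    {ι : Type} [Fintype ι] (v : ι → M) (A : Matrix ι ι S) : Prop :=
  (∀ m : M, ∃ c : ι → S, ∑ i, c i • v i = m) ∧ ∀ j, ∑ i, A i j • v i = 0

section
variable {S : Type*} [CommRing S] {M : Type*} [AddCommGroup M] [Module S M]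

lemma dvd_of_isRel {x : S} (hx : IsOrder S M x) {ι : Type} [Fintype ι] [DecidableEq ι]
    {v : ι → M} {A : Matrix ι ι S} (h : IsRel S v A) : x ∣ A.det := by
  have key : A.det ∈ fittingIdeal₀ S M := by
    apply Ideal.subset_span
    let e := Fintype.equivFin ι
    refine ⟨Fintype.card ι, Fintype.linearCombination S (v ∘ e.symm),
      A.reindex e e, ?_, ?_, ?_⟩
    · intro m
      obtain ⟨c, hc⟩ := h.1 m
      refine ⟨c ∘ e.symm, ?_⟩
      rw [Fintype.linearCombination_apply, ← hc]
      exact e.symm.sum_comp (fun i => c i • v i)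
    · intro w
      rw [Fintype.linearCombination_apply]
      simp only [Matrix.mulVec, dotProduct, Finset.sum_smul]
      rw [Finset.sum_comm]
      apply Finset.sum_eq_zero
      intro j _
      have := h.2 (e.symm j)
      rw [← e.symm.sum_comp] at this
      have h2 := congrArg (fun m => w j • m) this
      simp only [Finset.smul_sum, smul_zero, smul_smul] at h2
      rw [← h2]
      apply Finset.sum_congr rfl
      intro i _
      simp [mul_comm]
    · exact (Matrix.det_reindex_self e A).symm
  exact Ideal.mem_span_singleton.1 (hx.1 key)

lemma dvd_order {x : S} (hx : IsOrder S M x) {d : S}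
    (h : ∀ (n : ℕ) (v : Fin n → M) (A : Matrix (Fin n) (Fin n) S), IsRel S v A → d ∣ A.det) :
    d ∣ x := by
  rw [← Ideal.span_singleton_le_span_singleton]
  apply hx.2
  apply Ideal.span_le.2
  rintro r ⟨n, φ, A, hφ, hA, rfl⟩
  apply Ideal.mem_span_singleton.2
  have hh : ∀ c : Fin n → S, ∑ i, c i • φ (Pi.single i 1) = φ c := by
    intro c
    conv_rhs => rw [pi_eq_sum_univ' c]
    rw [map_sum]
    simp [map_smul]
  apply h n (fun i => φ (Pi.single i 1)) A
  constructor
  · intro m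
    obtain ⟨c, hc⟩ := hφ m
    exact ⟨c, (hh c).trans hc⟩
  · intro j
    rw [hh (fun i => A i j), ← hA (Pi.single j 1)]
    congr 1
    ext i
    simp

lemma order_ne_zero [IsDomain S] [Module.Finite S M] (hM : Module.IsTorsion S M)
    {x : S} (hx : IsOrder S M x) : x ≠ 0 := by
  obtain ⟨a, ha, ha0⟩ : ∃ a : S, (∀ m : M, a • m = 0) ∧ a ≠ 0 := by
    obtain ⟨a, ha, ha0⟩ := Submodule.annihilator_top_inter_nonZeroDivisors hM
    exact ⟨a, fun m => Submodule.mem_annihilator.1 ha m trivial, nonZeroDivisors.ne_zero ha0⟩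
  obtain ⟨n, v, hv⟩ := Module.Finite.exists_fin (R := S) (M := M)
  rintro rfl
  have := dvd_of_isRel hx (v := v) (A := Matrix.diagonal fun _ => a) ⟨?_, ?_⟩
  · rw [zero_dvd_iff, Matrix.det_diagonal] at this
    simp at this
    exact ha0 this.1
  · intro m
    have : m ∈ Submodule.span S (Set.range v) := hv ▸ trivial
    exact (Submodule.mem_span_range_iff_exists_fun S).1 this
  · intro j
    apply Finset.sum_eq_zero
    intro i _
    by_cases hij : i = j
    · subst hij; simp [ha]
    · simp [hij]

end

section
variable {S : Type*} [CommRing S] [IsDomain S] [UniqueFactorizationMonoid S]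

lemma dvd_mul_of_forall {y b x : S} (Q : S → Prop) (hx : ∀ d, (∀ a, Q a → d ∣ a) → d ∣ x)
    (h : ∀ a, Q a → y ∣ a * b) : y ∣ x * b := by
  by_cases hb : b = 0
  · simp [hb]
  obtain ⟨y', b', d, hrel, rfl, rfl⟩ := UniqueFactorizationMonoid.exists_reduced_factors' y b hb
  have hd0 : d ≠ 0 := left_ne_zero_of_mul hb
  have h1 : y' ∣ x := by
    apply hx
    intro a ha
    have h2 := h a ha
    rw [mul_left_comm] at h2
    exact hrel.dvd_of_dvd_mul_right ((mul_dvd_mul_iff_left hd0).1 h2)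
  rw [mul_left_comm]
  exact mul_dvd_mul_left d (h1.mul_right b')

lemma dvd_of_local {a c : S} (ha : a ≠ 0)
    (h : ∀ p : S, Prime p → ∃ t : S, ¬ p ∣ t ∧ a ∣ t * c) : a ∣ c := by
  obtain ⟨a', c', d, hrel, rfl, rfl⟩ := UniqueFactorizationMonoid.exists_reduced_factors a ha c
  have hd0 : d ≠ 0 := left_ne_zero_of_mul ha
  have ha0 : a' ≠ 0 := right_ne_zero_of_mul ha
  have hu : IsUnit a' := by
    by_contra hu
    obtain ⟨p, hp, hpa⟩ := WfDvdMonoid.exists_irreducible_factor hu ha0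
    obtain ⟨t, ht, h2⟩ := h p hp.prime
    rw [mul_left_comm] at h2
    exact ht (hpa.trans (hrel.dvd_of_dvd_mul_right ((mul_dvd_mul_iff_left hd0).1 h2)))
  exact mul_dvd_mul_left d (hu.dvd)

lemma exists_pivot {p : S} (hp : Prime p) (I : Ideal S) :
    ∃ b ∈ I, ∃ s : S, ¬ p ∣ s ∧ ∀ a ∈ I, b ∣ s * a := by
  classical
  by_cases hI : ∃ b ∈ I, b ≠ 0
  · obtain ⟨b₀, hb₀, hb0⟩ := hI
    have hex : ∃ m : ℕ, ∃ b ∈ I, ∃ u : S, ¬ p ∣ u ∧ b = p ^ m * u := by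
      obtain ⟨m, u, hu, h⟩ := WfDvdMonoid.max_power_factor hb0 hp.irreducible
      exact ⟨m, b₀, hb₀, u, hu, h⟩
    obtain ⟨b, hb, u, hu, hbu⟩ := Nat.find_spec hex
    refine ⟨b, hb, u, hu, fun a ha => ?_⟩
    by_cases ha0 : a = 0
    · simp [ha0]
    obtain ⟨m, w, hw, h⟩ := WfDvdMonoid.max_power_factor ha0 hp.irreducible
    have hle : Nat.find hex ≤ m := Nat.find_min' hex ⟨a, ha, w, hw, h⟩
    rw [hbu, mul_comm u a]
    exact mul_dvd_mul ((pow_dvd_pow p hle).trans (h ▸ dvd_mul_right _ _)) dvd_rfl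
  · push Not at hI
    exact ⟨0, I.zero_mem, 1, hp.not_dvd_one, fun a ha => by simp [hI a ha]⟩

lemma exists_local_basis {p : S} (hp : Prime p) (n : ℕ) (K : Submodule S (Fin n → S)) :
    ∃ (b : Fin n → Fin n → S) (s : S), ¬ p ∣ s ∧ (∀ i, b i ∈ K) ∧
      ∀ k ∈ K, ∃ c : Fin n → S, s • k = ∑ i, c i • b i := by
  induction n with
  | zero =>
    exact ⟨Fin.elim0, 1, hp.not_dvd_one, fun i => i.elim0,
      fun k _ => ⟨Fin.elim0, Subsingleton.elim _ _⟩⟩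
  | succ n ih =>
    obtain ⟨b0, hb0, u, hu, hI⟩ := exists_pivot hp (K.map (LinearMap.proj (0 : Fin (n+1))))
    obtain ⟨b, hbK, hb⟩ := hb0
    let L : (Fin n → S) →ₗ[S] (Fin (n+1) → S) :=
      { toFun := fun v => Fin.cons 0 v
        map_add' := fun v w => by
          ext i; refine Fin.cases ?_ (fun i => ?_) i <;> simp
        map_smul' := fun c w => by
          ext i; refine Fin.cases ?_ (fun i => ?_) i <;> simp }
    obtain ⟨b', s', hs', hb', hK'⟩ := ih (K.comap L)
    refine ⟨Fin.cons b (fun i => L (b' i)), s' * u, fun h => (hp.dvd_or_dvd h).elim hs' hu,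
      fun i => ?_, fun k hk => ?_⟩
    · refine Fin.cases ?_ (fun i => ?_) i
      · simpa using hbK
      · simpa using hb' i
    · obtain ⟨c, hc⟩ := hI (k 0) ⟨k, hk, rfl⟩
      have hL : u • k - c • b = L (Fin.tail (u • k - c • b)) := by
        have h0 : (u • k - c • b) 0 = 0 := by
          simp at hb
          simp [hc, ← hb, mul_comm]
        ext i
        refine Fin.cases ?_ (fun i => ?_) i
        · rw [h0]; rfl
        · rfl
      obtain ⟨d, hd⟩ := hK' (Fin.tail (u • k - c • b)) (by
        rw [Submodule.mem_comap, ← hL]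
        exact K.sub_mem (K.smul_mem _ hk) (K.smul_mem _ hbK))
      have hd2 := congrArg L hd
      rw [map_smul, ← hL, map_sum] at hd2
      refine ⟨Fin.cons (s' * c) d, ?_⟩
      rw [Fin.sum_univ_succ]
      simp only [Fin.cons_zero, Fin.cons_succ]
      simp only [map_smul] at hd2
      rw [← hd2, smul_sub, smul_smul, smul_smul]
      abel

variable {M N P : Type*} [AddCommGroup M] [AddCommGroup N] [AddCommGroup P]
    [Module S M] [Module S N] [Module S P]

lemma order_dvd_det_mul (f : M →ₗ[S] N) (g : N →ₗ[S] P)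
    (hg : Function.Surjective g) (hfg : Function.Exact f g)
    {y : S} (hy : IsOrder S N y) {m n : ℕ} {v : Fin m → M} {A : Matrix (Fin m) (Fin m) S}
    (hA : IsRel S v A) {w : Fin n → P} {B : Matrix (Fin n) (Fin n) S} (hB : IsRel S w B) :
    y ∣ A.det * B.det := by
  choose w' hw' using fun i => hg (w i)
  have h1 : ∀ j, ∃ c : Fin m → S, ∑ i, B i j • w' i = f (∑ i, c i • v i) := by
    intro j
    obtain ⟨a, ha⟩ := (hfg (∑ i, B i j • w' i)).1 (by
      rw [map_sum, ← hB.2 j]; simp [hw'])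
    obtain ⟨c, hc⟩ := hA.1 a
    exact ⟨c, by rw [hc, ha]⟩
  choose c hc using h1
  rw [← Matrix.det_fromBlocks_zero₂₁ A (Matrix.of fun i j => - c j i) B]
  apply dvd_of_isRel hy (v := Sum.elim (f ∘ v) w')
  constructor
  · intro a
    obtain ⟨d, hd⟩ := hB.1 (g a)
    obtain ⟨q, hq⟩ := (hfg (a - ∑ i, d i • w' i)).1 (by
      rw [map_sub, map_sum, ← hd]; simp [hw'])
    obtain ⟨e, he⟩ := hA.1 q
    refine ⟨Sum.elim e d, ?_⟩
    have : f q = ∑ i, e i • f (v i) := by rw [← he, map_sum]; simp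
    simp [Fintype.sum_sum_type, ← this, hq]
  · rintro (j | j)
    · have := congrArg f (hA.2 j)
      simpa [Fintype.sum_sum_type] using this
    · simp [Fintype.sum_sum_type, hc j]

lemma order_mul_dvd_local [Module.Finite S M] (f : M →ₗ[S] N) (g : N →ₗ[S] P)
    (hf : Function.Injective f) (hg : Function.Surjective g) (hfg : Function.Exact f g)
    {x z : S} (hx : IsOrder S M x) (hz : IsOrder S P z) {n : ℕ} {v : Fin n → N}
    {C : Matrix (Fin n) (Fin n) S} (hC : IsRel S v C) {p : S} (hp : Prime p) :
    ∃ t : S, ¬ p ∣ t ∧ x * z ∣ t * C.det := by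
  let T := Fintype.linearCombination S v
  have hT : ∀ c : Fin n → S, T c = ∑ i, c i • v i := fun c => Fintype.linearCombination_apply _ _ _
  obtain ⟨b, s, hs, hbK, hK⟩ := exists_local_basis hp n (LinearMap.ker (g ∘ₗ T))
  have h1 : ∀ i, ∃ a : M, f a = T (b i) := fun i => (hfg _).1 (hbK i)
  choose μ hμ using h1
  obtain ⟨k, w, hw⟩ := Module.Finite.exists_fin (R := S) (M := M)
  have hfK : ∀ c : Fin n → S, ∀ a : M, f a = T c → ∃ d : Fin n → S, s • c = ∑ i, d i • b i ∧
      s • a = ∑ i, d i • μ i := by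
    intro c a h
    obtain ⟨d, hd⟩ := hK c (by
      rw [LinearMap.mem_ker, LinearMap.comp_apply, ← h]; exact hfg.apply_apply_eq_zero a)
    refine ⟨d, hd, hf ?_⟩
    rw [map_smul, h, ← map_smul, hd]
    simp [hμ]
  have h2 : ∀ j, ∃ d : Fin n → S, s • w j = ∑ i, d i • μ i := by
    intro j
    obtain ⟨c, hc⟩ := hC.1 (f (w j))
    obtain ⟨d, -, hd⟩ := hfK c (w j) (by rw [hT, hc])
    exact ⟨d, hd⟩
  choose D hD using h2
  have h3 := fun j => hfK (fun i => C i j) 0 (by rw [hT, hC.2 j, map_zero])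
  choose A hA hA0 using h3
  have hxd : x ∣ (Matrix.of fun i j => A j i).det * s ^ k := by
    have := dvd_of_isRel hx (v := Sum.elim μ w) (A := Matrix.fromBlocks (Matrix.of fun i j => A j i)
      (Matrix.of fun i j => - D j i) 0 (Matrix.diagonal fun _ => s)) ⟨?_, ?_⟩
    · rw [Matrix.det_fromBlocks_zero₂₁, Matrix.det_diagonal] at this
      simpa using this
    · intro m
      obtain ⟨c, hc⟩ := (Submodule.mem_span_range_iff_exists_fun S).1
        (show m ∈ Submodule.span S (Set.range w) from hw ▸ trivial)
      exact ⟨Sum.elim 0 c, by simp [Fintype.sum_sum_type, hc]⟩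
    · rintro (j | j)
      · simp [Fintype.sum_sum_type, ← hA0 j]
      · simp [Fintype.sum_sum_type, Matrix.diagonal_apply, ite_smul, hD j]
  have hzd : z ∣ (Matrix.of fun i j => b j i).det := by
    apply dvd_of_isRel hz (v := g ∘ v)
    constructor
    · intro q
      obtain ⟨a, rfl⟩ := hg q
      obtain ⟨c, rfl⟩ := hC.1 a
      exact ⟨c, by simp⟩
    · intro j
      have := hbK j
      rw [LinearMap.mem_ker, LinearMap.comp_apply, hT, map_sum] at this
      simpa using this
  have hmul : s • C = (Matrix.of fun i j => b j i) * (Matrix.of fun i j => A j i) := by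
    ext i j
    have := congrFun (hA j) i
    simp only [Pi.smul_apply, Finset.sum_apply, smul_eq_mul] at this
    simp only [Matrix.smul_apply, smul_eq_mul, Matrix.mul_apply, Matrix.of_apply, this]
    exact Finset.sum_congr rfl fun _ _ => mul_comm _ _
  have hdet := congrArg Matrix.det hmul
  rw [Matrix.det_smul, Matrix.det_mul, Fintype.card_fin] at hdet
  refine ⟨s ^ k * s ^ n, fun h => ?_, ?_⟩
  · rw [← pow_add] at h
    exact hs (hp.dvd_of_dvd_pow h)
  · rw [mul_assoc, hdet]
    convert mul_dvd_mul hxd hzd using 1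
    ring

end
end OrdAux

open OrdAux

/-- For a short exact sequence `0 → M → N → P → 0` of finitely generated torsion modules
over a Noetherian UFD `S`, one has `Ord(N) = Ord(M)·Ord(P)` up to units. -/
theorem stmt_19 (S : Type*) [CommRing S] [IsDomain S] [IsNoetherianRing S]
    [UniqueFactorizationMonoid S]
    (M N P : Type*) [AddCommGroup M] [AddCommGroup N] [AddCommGroup P]
    [Module S M] [Module S N] [Module S P]
    [Module.Finite S M] [Module.Finite S N] [Module.Finite S P]
    (hM : Module.IsTorsion S M) (hN : Module.IsTorsion S N) (hP : Module.IsTorsion S P)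
    (f : M →ₗ[S] N) (g : N →ₗ[S] P)
    (hf : Function.Injective f) (hg : Function.Surjective g)
    (hfg : Function.Exact f g)
    (x y z : S) (hx : IsOrder S M x) (hy : IsOrder S N y) (hz : IsOrder S P z) :
    Associated y (x * z) := by
  apply associated_of_dvd_dvd
  · refine dvd_mul_of_forall (fun a => ∃ (m : ℕ) (v : Fin m → M) (A : Matrix (Fin m) (Fin m) S),
      IsRel S v A ∧ a = A.det) (fun d h => dvd_order hx fun n v A hA => h _ ⟨n, v, A, hA, rfl⟩) ?_
    rintro a ⟨m, v, A, hA, rfl⟩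
    rw [mul_comm]
    refine dvd_mul_of_forall (fun a => ∃ (m : ℕ) (v : Fin m → P) (A : Matrix (Fin m) (Fin m) S),
      IsRel S v A ∧ a = A.det) (fun d h => dvd_order hz fun n v A hA => h _ ⟨n, v, A, hA, rfl⟩) ?_
    rintro b ⟨n, w, B, hB, rfl⟩
    rw [mul_comm]
    exact order_dvd_det_mul f g hg hfg hy hA hB
  · apply dvd_order hy
    intro n v C hC
    apply dvd_of_local (mul_ne_zero (order_ne_zero hM hx) (order_ne_zero hP hz))
    intro p hp
    exact order_mul_dvd_local f g hf hg hfg hx hz hC hp
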